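/- For H a finitely generated free abelian group and M a finitely generated torsion submodule situation: if M_1 ⊗ Z[H] and M_2 ⊗ Z[H] are as in the setting of extension of scalars from Z[H_i] to Z[H] for H = H_1 ⊕ H_2, then the torsion submodule of the direct sum is the direct sum of torsion submodules, and hence ord_{Z[H]}(tor(⊕_i M_i ⊗ Z[H])) = Π_i ord_{Z[H_i]}(tor M_i). -/

import Mathlib

/-!
STATEMENT 3: For `H₁, H₂` finitely generated free abelian groups,
`H = H₁ ⊕ H₂`, and `M i` finitely generated `ℤ[H i]`-modules: the torsion
submodule of the direct sum `(M₁ ⊗ ℤ[H]) ⊕ (M₂ ⊗ ℤ[H])` is the direct sum of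
the torsion submodules, and hence
`ord_{ℤ[H]}(tor(⊕ᵢ M i ⊗ ℤ[H])) = Πᵢ ord_{ℤ[H i]}(tor M i)` (in `ℤ[H]`, up to
units; orders are rendered by the predicate `IsOrderOf`).
-/

open TensorProduct

/-- `d` is the zeroth order of the module `M` over `R`: a gcd of the maximal
minors of a finite presentation matrix of `M`. -/
def IsOrderOf (R : Type*) [CommRing R] (M : Type*) [AddCommGroup M] [Module R M]
    (d : R) : Prop :=
  ∃ (s r : ℕ) (_ : s ≤ r) (α : Matrix (Fin s) (Fin r) R)
    (p : (Fin s → R) →ₗ[R] M),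
      Function.Surjective p ∧
      LinearMap.ker p = LinearMap.range α.mulVecLin ∧
      (∀ c : Fin s → Fin r, d ∣ (α.submatrix id c).det) ∧
      (∀ e : R, (∀ c : Fin s → Fin r, e ∣ (α.submatrix id c).det) → e ∣ d)

noncomputable section

variable (n₁ n₂ : ℕ)

/-- `ℤ[H₁]`, `H₁ = ℤ^{n₁}`. -/
abbrev R1 : Type := AddMonoidAlgebra ℤ (Fin n₁ → ℤ)

/-- `ℤ[H₂]`, `H₂ = ℤ^{n₂}`. -/
abbrev R2 : Type := AddMonoidAlgebra ℤ (Fin n₂ → ℤ)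

/-- `ℤ[H]`, `H = H₁ ⊕ H₂`. -/
abbrev RH : Type := AddMonoidAlgebra ℤ ((Fin n₁ → ℤ) × (Fin n₂ → ℤ))

instance : Algebra (R1 n₁) (RH n₁ n₂) :=
  (AddMonoidAlgebra.mapDomainRingHom ℤ
    (AddMonoidHom.inl (Fin n₁ → ℤ) (Fin n₂ → ℤ))).toAlgebra

instance : Algebra (R2 n₂) (RH n₁ n₂) :=
  (AddMonoidAlgebra.mapDomainRingHom ℤ
    (AddMonoidHom.inr (Fin n₁ → ℤ) (Fin n₂ → ℤ))).toAlgebra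

theorem aux_ufd (n : ℕ) : ∀ (R : Type) [CommRing R] [IsDomain R] [UniqueFactorizationMonoid R],
    UniqueFactorizationMonoid (AddMonoidAlgebra R (Fin n → ℤ)) := by
  induction n with
  | zero =>
    intro R _ _ h
    exact (AddMonoidAlgebra.uniqueRingEquiv (R := R) (Fin 0 → ℤ)).symm.toMulEquiv.uniqueFactorizationMonoid h
  | succ n ih =>
    intro R _ _ h
    have h1 := ih R
    have h2 : UniqueFactorizationMonoid (LaurentPolynomial (AddMonoidAlgebra R (Fin n → ℤ))) :=
      UniqueFactorizationMonoid.of_isLocalization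
        (M := Polynomial (AddMonoidAlgebra R (Fin n → ℤ))) (Submonoid.powers Polynomial.X) _
    let e0 : (Fin (n+1) → ℤ) ≃+ ℤ × (Fin n → ℤ) :=
      { (Fin.consEquiv (fun _ : Fin (n+1) => ℤ)).symm with
        map_add' := fun _ _ => rfl }
    let e1 : AddMonoidAlgebra R (Fin (n+1) → ℤ) ≃+* AddMonoidAlgebra R (ℤ × (Fin n → ℤ)) :=
      (AddMonoidAlgebra.domCongr R R e0).toRingEquiv
    exact (e1.trans AddMonoidAlgebra.curryRingEquiv).symm.toMulEquiv.uniqueFactorizationMonoid h2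

theorem aux_homog {R G : Type*} [CommRing R] [IsDomain R] [AddCommGroup G] [TwoUniqueSums G]
    (e f : AddMonoidAlgebra R G) (m : R) (hm : m ≠ 0) (h : e * f = AddMonoidAlgebra.single 0 m) :
    ∃ g a, e = AddMonoidAlgebra.single g a := by
  classical
  have hne : e * f ≠ 0 := by rw [h]; simpa using hm
  have he : e ≠ 0 := left_ne_zero_of_mul hne
  have hf : f ≠ 0 := right_ne_zero_of_mul hne
  have hce : e.coeff ≠ 0 := by simpa using he
  have hcf : f.coeff ≠ 0 := by simpa using hf
  have pe : 0 < e.coeff.support.card := Finset.card_pos.2 (Finsupp.support_nonempty_iff.2 hce)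
  have pf : 0 < f.coeff.support.card := Finset.card_pos.2 (Finsupp.support_nonempty_iff.2 hcf)
  by_cases hc : 1 < e.coeff.support.card * f.coeff.support.card
  · exfalso
    obtain ⟨p, hp, q, hq, hpq, up, uq⟩ := TwoUniqueSums.uniqueAdd_of_one_lt_card hc
    have key : ∀ r ∈ e.coeff.support ×ˢ f.coeff.support,
        UniqueAdd e.coeff.support f.coeff.support r.1 r.2 → r.1 + r.2 = 0 := by
      intro r hr ur
      have := AddMonoidAlgebra.coeff_mul_add_of_uniqueAdd ur
      rw [h] at this
      by_contra h0
      simp [Ne.symm h0] at this hr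
      tauto
    have h1 := key p hp up
    have h2 := key q hq uq
    simp only [Finset.mem_product] at hp hq
    have := up hq.1 hq.2 (h2.trans h1.symm)
    exact hpq (Prod.ext this.1.symm this.2.symm)
  · have : e.coeff.support.card = 1 := by nlinarith
    obtain ⟨g, hg⟩ := Finset.card_eq_one.1 this
    refine ⟨g, e.coeff g, ?_⟩
    have := (Finsupp.support_eq_singleton.1 hg).2
    ext x
    rw [this]; simp

/-- gcds of families are preserved -/
def GcdPres (R S : Type*) [CommRing R] [CommRing S] [Algebra R S] : Prop :=
  ∀ (ι : Type) (m : ι → R) (d : R), (∀ e, (∀ i, e ∣ m i) → e ∣ d) →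
    ∀ e : S, (∀ i, e ∣ algebraMap R S (m i)) → e ∣ algebraMap R S d

theorem aux_gcd {R S G : Type*} [CommRing R] [IsDomain R] [AddCommGroup G] [TwoUniqueSums G]
    [CommRing S] [Algebra R S] (φ : S ≃ₐ[R] AddMonoidAlgebra R G) : GcdPres R S := by
  intro ι m d hd e he
  by_cases h0 : ∀ i, m i = 0
  · have : d = 0 := by
      have := hd 0 (by simp [h0])
      simpa using this
    simp [this]
  push Not at h0
  obtain ⟨i0, hi0⟩ := h0
  have he' : ∀ i, ∃ f, φ e * f = AddMonoidAlgebra.single 0 (m i) := by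
    intro i
    obtain ⟨f, hf⟩ := he i
    refine ⟨φ f, ?_⟩
    rw [← map_mul, ← hf, AlgEquiv.commutes]; rfl
  obtain ⟨f, hf⟩ := he' i0
  obtain ⟨g, a, hga⟩ := aux_homog _ _ _ hi0 hf
  have ha : a ∣ d := by
    apply hd
    intro i
    obtain ⟨f, hf⟩ := he' i
    rw [hga] at hf
    have := congrArg (fun x => x.coeff (g + -g)) hf
    simp only [AddMonoidAlgebra.coeff_single_mul_add] at this
    refine ⟨f.coeff (-g), ?_⟩
    rw [this]; simp
  obtain ⟨b, rfl⟩ := ha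
  refine ⟨φ.symm (AddMonoidAlgebra.single (-g) b), ?_⟩
  apply φ.injective
  rw [AlgEquiv.commutes, map_mul φ, hga, AlgEquiv.apply_symm_apply,
    AddMonoidAlgebra.single_mul_single]
  simp

theorem aux_tf {R S N : Type*} [CommRing R] [IsDomain R] [CommRing S] [IsDomain S] [Algebra R S]
    [Module.Flat R S] [FaithfulSMul R S] [AddCommGroup N] [Module R N] [Module.IsTorsionFree R N] :
    Module.IsTorsionFree S (S ⊗[R] N) := by
  classical
  let K := FractionRing R
  let b := Module.Free.chooseBasis K (K ⊗[R] N)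
  let j : N →ₗ[R] (Module.Free.ChooseBasisIndex K (K ⊗[R] N) →₀ K) :=
    (b.repr.toLinearMap.restrictScalars R) ∘ₗ (TensorProduct.mk R K N 1)
  have hj : Function.Injective j := by
    refine b.repr.injective.comp ?_
    refine (IsLocalizedModule.injective_iff_isRegular (S := nonZeroDivisors R) (TensorProduct.mk R K N 1)).2 ?_
    intro c
    exact (isRegular_iff_mem_nonZeroDivisors.2 c.2).isSMulRegular
  have hloc : IsLocalization (Algebra.algebraMapSubmonoid S (nonZeroDivisors R)) (S ⊗[R] K) :=
    inferInstance
  have hle : Algebra.algebraMapSubmonoid S (nonZeroDivisors R) ≤ nonZeroDivisors S :=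
    algebraMapSubmonoid_le_nonZeroDivisors_of_faithfulSMul _ le_rfl
  have : IsDomain (S ⊗[R] K) := IsLocalization.isDomain_of_le_nonZeroDivisors (R := S) _ hle
  have hinj := IsLocalization.injective (S ⊗[R] K) hle
  have : FaithfulSMul S (S ⊗[R] K) := (faithfulSMul_iff_algebraMap_injective _ _).2 hinj
  have htf : Module.IsTorsionFree S (S ⊗[R] K) := inferInstance
  let J := (TensorProduct.finsuppRight R S S K (Module.Free.ChooseBasisIndex K (K ⊗[R] N))).toLinearMap ∘ₗ
    (j.baseChange S)
  have hJ : Function.Injective J := by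
    rw [LinearMap.coe_comp]
    refine (LinearEquiv.injective _).comp ?_
    exact Module.Flat.lTensor_preserves_injective_linearMap j hj
  exact Function.Injective.moduleIsTorsionFree J hJ (fun c x => map_smul J c x)

noncomputable def aux_torEquiv {R S M : Type*} [CommRing R] [IsDomain R] [CommRing S] [IsDomain S] [Algebra R S]
    [Module.Flat R S] [FaithfulSMul R S] [AddCommGroup M] [Module R M] :
    (S ⊗[R] Submodule.torsion R M) ≃ₗ[S] Submodule.torsion S (S ⊗[R] M) := by
  let T := Submodule.torsion R M
  let f := T.subtype.baseChange S
  have hinj : Function.Injective f :=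
    Module.Flat.lTensor_preserves_injective_linearMap _ T.injective_subtype
  have hex : Function.Exact f (T.mkQ.baseChange S) :=
    lTensor_exact S (LinearMap.exact_subtype_mkQ T) T.mkQ_surjective
  have hr : LinearMap.range f = Submodule.torsion S (S ⊗[R] M) := by
    apply le_antisymm
    · rintro _ ⟨x, rfl⟩
      induction x with
      | zero => simp
      | add x y hx hy => rw [map_add]; exact add_mem hx hy
      | tmul s m =>
        obtain ⟨m, a, ha⟩ := m
        refine ⟨⟨algebraMap R S a, ?_⟩, ?_⟩
        · rw [mem_nonZeroDivisors_iff_ne_zero]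
          simp
        · change algebraMap R S a • (s ⊗ₜ[R] m) = 0
          rw [algebraMap_smul, ← TensorProduct.tmul_smul]
          have ha' : (a : R) • m = 0 := ha
          rw [ha', TensorProduct.tmul_zero]
    · intro x hx
      rw [← hex.linearMap_ker_eq] 
      have : Module.IsTorsionFree S (S ⊗[R] (M ⧸ T)) := aux_tf
      have h0 := (Submodule.isTorsionFree_iff_torsion_eq_bot (R := S)).1 this
      obtain ⟨a, ha⟩ := hx
      have : T.mkQ.baseChange S x ∈ Submodule.torsion S (S ⊗[R] (M ⧸ T)) := 
        ⟨a, by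
          have ha' : (a : S) • x = 0 := ha
          change (a : S) • (T.mkQ.baseChange S x) = 0
          rw [← map_smul, ha', map_zero]⟩
      rw [h0] at this
      exact this
  exact (LinearEquiv.ofInjective f hinj).trans (LinearEquiv.ofEq _ _ hr)

theorem aux_order_equiv {R M N : Type*} [CommRing R] [AddCommGroup M] [Module R M]
    [AddCommGroup N] [Module R N] (e : M ≃ₗ[R] N) {d : R} (h : IsOrderOf R M d) :
    IsOrderOf R N d := by
  obtain ⟨s, r, hsr, α, p, hp, hk, h1, h2⟩ := h
  refine ⟨s, r, hsr, α, e.toLinearMap ∘ₗ p, e.surjective.comp hp, ?_, h1, h2⟩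
  rw [LinearEquiv.ker_comp, hk]

theorem aux_order_baseChange {R S M : Type*} [CommRing R] [CommRing S] [Algebra R S]
    [AddCommGroup M] [Module R M] (hg : GcdPres R S) {d : R} (h : IsOrderOf R M d) :
    IsOrderOf S (S ⊗[R] M) (algebraMap R S d) := by
  obtain ⟨s, r, hsr, α, p, hp, hk, h1, h2⟩ := h
  have hdet : ∀ c : Fin s → Fin r, ((α.map (algebraMap R S)).submatrix id c).det =
      algebraMap R S (α.submatrix id c).det := by
    intro c
    rw [RingHom.map_det]; rfl
  refine ⟨s, r, hsr, α.map (algebraMap R S),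
    (p.baseChange S) ∘ₗ (TensorProduct.piScalarRight R S S (Fin s)).symm.toLinearMap, ?_, ?_, ?_, ?_⟩
  · rw [LinearMap.coe_comp]
    exact (LinearMap.baseChange_surjective S hp).comp (LinearEquiv.surjective _)
  · have hex : Function.Exact (α.mulVecLin.baseChange S) (p.baseChange S) :=
      lTensor_exact S (LinearMap.exact_iff.2 hk) hp
    have hcomm : (TensorProduct.piScalarRight R S S (Fin s)).toLinearMap ∘ₗ
        (α.mulVecLin.baseChange S) = (α.map (algebraMap R S)).mulVecLin ∘ₗ
          (TensorProduct.piScalarRight R S S (Fin r)).toLinearMap := by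
      ext j i
      simp [Algebra.smul_def, Matrix.mulVec, dotProduct, Pi.single_apply]
    ext y
    constructor
    · intro hy
      obtain ⟨z, hz⟩ := (hex _).1 hy
      refine ⟨TensorProduct.piScalarRight R S S (Fin r) z, ?_⟩
      have := LinearMap.congr_fun hcomm z
      simp only [LinearMap.comp_apply, LinearEquiv.coe_coe] at this
      rw [← this, hz]
      exact LinearEquiv.apply_symm_apply _ _
    · rintro ⟨z, rfl⟩
      obtain ⟨w, rfl⟩ := (TensorProduct.piScalarRight R S S (Fin r)).surjective z
      have := LinearMap.congr_fun hcomm w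
      simp only [LinearMap.comp_apply, LinearEquiv.coe_coe] at this
      rw [← this, LinearMap.mem_ker, LinearMap.comp_apply, LinearEquiv.coe_coe,
        LinearEquiv.symm_apply_apply]
      exact (hex _).2 ⟨w, rfl⟩
  · intro c
    rw [hdet]
    exact map_dvd _ (h1 c)
  · intro e he
    exact hg _ (fun c => (α.submatrix id c).det) d h2 e (fun c => by rw [← hdet]; exact he c)

theorem aux_gcd_mul {S ι : Type*} [CommRing S] [IsDomain S] [UniqueFactorizationMonoid S]
    [Fintype ι] (n : ι → S) (d m e : S)
    (hd : ∀ e, (∀ i, e ∣ n i) → e ∣ d) (he : ∀ i, e ∣ m * n i) : e ∣ m * d := by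
  classical
  obtain ⟨_⟩ : Nonempty (NormalizedGCDMonoid S) := inferInstance
  have h1 : e ∣ Finset.univ.gcd (fun i => m * n i) := Finset.dvd_gcd (fun i _ => he i)
  rw [(Finset.gcd_mul_left' Finset.univ n m).dvd_iff_dvd_right] at h1
  have h2 : Finset.univ.gcd n ∣ d := hd _ (fun i => Finset.gcd_dvd (Finset.mem_univ i))
  exact h1.trans (mul_dvd_mul_left m h2)

theorem aux_det_blocks {S ι₁ ι₂ κ₁ κ₂ : Type*} [CommRing S]
    [Fintype ι₁] [Fintype ι₂] [DecidableEq ι₁] [DecidableEq ι₂]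
    (α : Matrix ι₁ κ₁ S) (β : Matrix ι₂ κ₂ S) (a b : S)
    (ha : ∀ c : ι₁ → κ₁, a ∣ (α.submatrix id c).det)
    (hb : ∀ c : ι₂ → κ₂, b ∣ (β.submatrix id c).det)
    (c : ι₁ ⊕ ι₂ → κ₁ ⊕ κ₂) :
    a * b ∣ ((Matrix.fromBlocks α 0 0 β).submatrix id c).det := by
  by_cases h : ∃ σ : Equiv.Perm (ι₁ ⊕ ι₂), ∀ i, (c (σ i)).isLeft = i.isLeft
  · obtain ⟨σ, hσ⟩ := h
    have hl : ∀ i, ∃ k, c (σ (Sum.inl i)) = Sum.inl k := by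
      intro i
      have := hσ (Sum.inl i)
      exact Sum.isLeft_iff.1 this
    have hr : ∀ i, ∃ k, c (σ (Sum.inr i)) = Sum.inr k := by
      intro i
      have := hσ (Sum.inr i)
      exact Sum.isRight_iff.1 (by simpa using this)
    choose c1 hc1 using hl
    choose c2 hc2 using hr
    have hM : ((Matrix.fromBlocks α 0 0 β).submatrix id c).submatrix id σ =
        Matrix.fromBlocks (α.submatrix id c1) 0 0 (β.submatrix id c2) := by
      ext i j
      rcases i with i | i <;> rcases j with j | j <;> simp [hc1, hc2]
    have hd := Matrix.det_permute' σ ((Matrix.fromBlocks α 0 0 β).submatrix id c)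
    rw [hM, Matrix.det_fromBlocks_zero₂₁] at hd
    have h3 := mul_dvd_mul (ha c1) (hb c2)
    rw [hd] at h3
    rcases Int.units_eq_one_or (Equiv.Perm.sign σ) with hs | hs <;> simpa [hs] using h3
  · push Not at h
    have : ((Matrix.fromBlocks α 0 0 β).submatrix id c).det = 0 := by
      rw [Matrix.det_apply]
      apply Finset.sum_eq_zero
      intro σ _
      obtain ⟨i, hi⟩ := h σ.symm
      have : ∏ i, (Matrix.fromBlocks α 0 0 β).submatrix id c (σ i) i = 0 := by
        apply Finset.prod_eq_zero (Finset.mem_univ (σ.symm i))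
        rw [Matrix.submatrix_apply]
        simp only [id, Equiv.apply_symm_apply]
        rcases i with i | i <;> rcases hk : c (σ.symm _) with k | k <;> simp [hk] at hi ⊢
      rw [this, smul_zero]
    rw [this]; exact dvd_zero _

theorem aux_order_prod {S A B : Type*} [CommRing S] [IsDomain S] [UniqueFactorizationMonoid S]
    [AddCommGroup A] [Module S A] [AddCommGroup B] [Module S B] {a b : S}
    (hA : IsOrderOf S A a) (hB : IsOrderOf S B b) : IsOrderOf S (A × B) (a * b) := by
  obtain ⟨s, r, hsr, α, p, hp, hk, h1, h2⟩ := hA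
  obtain ⟨s', r', hsr', β, q, hq, hl, h3, h4⟩ := hB
  let γ := Matrix.fromBlocks α 0 0 β
  let E := (LinearEquiv.funCongrLeft S S (finSumFinEquiv (m := s) (n := s'))).trans
    (LinearEquiv.sumArrowLequivProdArrow (Fin s) (Fin s') S S)
  have hdet : ∀ c : Fin (s + s') → Fin (r + r'),
      ((γ.reindex finSumFinEquiv finSumFinEquiv).submatrix id c).det =
      (γ.submatrix id (finSumFinEquiv.symm ∘ c ∘ finSumFinEquiv)).det := by
    intro c
    rw [← Matrix.det_submatrix_equiv_self (finSumFinEquiv (m := s) (n := s'))]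
    congr 1
    ext i j
    simp
  refine ⟨s + s', r + r', by omega, γ.reindex finSumFinEquiv finSumFinEquiv,
    (p.prodMap q) ∘ₗ E.toLinearMap, ?_, ?_, ?_, ?_⟩
  · rw [LinearMap.coe_comp]
    exact (Function.Surjective.prodMap hp hq).comp E.surjective
  · let F := (LinearEquiv.funCongrLeft S S (finSumFinEquiv (m := r) (n := r'))).trans
      (LinearEquiv.sumArrowLequivProdArrow (Fin r) (Fin r') S S)
    have hcomm : ∀ z, E ((γ.reindex finSumFinEquiv finSumFinEquiv).mulVecLin z) =
        (α.mulVecLin.prodMap β.mulVecLin) (F z) := by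
      intro z
      refine Prod.ext (funext fun i => ?_) (funext fun i => ?_) <;>
      simp [E, F, γ, Matrix.mulVec, dotProduct, Fin.sum_univ_add, LinearMap.funLeft]
    ext y
    constructor
    · intro hy
      have hy' : (p.prodMap q) (E y) = 0 := hy
      have e1 : (E y).1 ∈ LinearMap.ker p := congrArg Prod.fst hy'
      have e2 : (E y).2 ∈ LinearMap.ker q := congrArg Prod.snd hy'
      rw [hk] at e1
      rw [hl] at e2
      obtain ⟨u, hu⟩ := e1
      obtain ⟨v, hv⟩ := e2
      refine ⟨F.symm (u, v), ?_⟩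
      apply E.injective
      rw [hcomm, LinearEquiv.apply_symm_apply]
      exact Prod.ext hu hv
    · rintro ⟨z, rfl⟩
      change (p.prodMap q) (E _) = 0
      rw [hcomm]
      refine Prod.ext ?_ ?_
      · change α.mulVecLin _ ∈ LinearMap.ker p
        rw [hk]; exact ⟨_, rfl⟩
      · change β.mulVecLin _ ∈ LinearMap.ker q
        rw [hl]; exact ⟨_, rfl⟩
  · intro c
    rw [hdet]
    exact aux_det_blocks α β a b h1 h3 _
  · intro e he
    have key : ∀ c1 c2, e ∣ (α.submatrix id c1).det * (β.submatrix id c2).det := by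
      intro c1 c2
      have := he (finSumFinEquiv ∘ Sum.map c1 c2 ∘ finSumFinEquiv.symm)
      rw [hdet] at this
      have hM : γ.submatrix id (finSumFinEquiv.symm ∘ (finSumFinEquiv ∘ Sum.map c1 c2 ∘
          finSumFinEquiv.symm) ∘ finSumFinEquiv) =
          Matrix.fromBlocks (α.submatrix id c1) 0 0 (β.submatrix id c2) := by
        ext i j
        rcases i with i | i <;> rcases j with j | j <;> simp [γ]
      rwa [hM, Matrix.det_fromBlocks_zero₂₁] at this
    have k1 : ∀ c1, e ∣ (α.submatrix id c1).det * b := fun c1 =>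
      aux_gcd_mul (fun c2 : Fin s' → Fin r' => (β.submatrix id c2).det) b _ e h4 (key c1)
    have := aux_gcd_mul (fun c : Fin s → Fin r => (α.submatrix id c).det) a b e h2
      (fun c => by rw [mul_comm]; exact k1 c)
    rwa [mul_comm]

theorem aux_torsion_prod {S A B : Type*} [CommRing S] [AddCommGroup A] [Module S A]
    [AddCommGroup B] [Module S B] :
    Submodule.torsion S (A × B) = (Submodule.torsion S A).prod (Submodule.torsion S B) := by
  ext ⟨x, y⟩
  rw [Submodule.mem_prod]
  constructor
  · rintro ⟨a, ha⟩
    exact ⟨⟨a, congrArg Prod.fst ha⟩, ⟨a, congrArg Prod.snd ha⟩⟩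
  · rintro ⟨⟨a, ha⟩, ⟨b, hb⟩⟩
    refine ⟨a * b, Prod.ext ?_ ?_⟩
    · change (a * b) • x = 0
      have ha : a • x = 0 := ha
      rw [mul_comm, mul_smul, ha, smul_zero]
    · change (a * b) • y = 0
      have hb : b • y = 0 := hb
      rw [mul_smul, hb, smul_zero]

def aux_phi2 : RH n₁ n₂ ≃ₐ[R2 n₂] AddMonoidAlgebra (R2 n₂) (Fin n₁ → ℤ) :=
  AlgEquiv.ofRingEquiv (f := AddMonoidAlgebra.curryRingEquiv) (by
    intro x
    change (AddMonoidAlgebra.curryRingEquiv.toRingHom.comp (AddMonoidAlgebra.mapDomainRingHom ℤ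
      (AddMonoidHom.inr (Fin n₁ → ℤ) (Fin n₂ → ℤ)))) x =
      (algebraMap (R2 n₂) (AddMonoidAlgebra (R2 n₂) (Fin n₁ → ℤ))) x
    congr 1
    ext <;> simp)

def aux_phi1 : RH n₁ n₂ ≃ₐ[R1 n₁] AddMonoidAlgebra (R1 n₁) (Fin n₂ → ℤ) :=
  AlgEquiv.ofRingEquiv (f := (AddMonoidAlgebra.domCongr ℤ ℤ
      (AddEquiv.prodComm (M := Fin n₁ → ℤ) (N := Fin n₂ → ℤ))).toRingEquiv.trans
      AddMonoidAlgebra.curryRingEquiv) (by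
    intro x
    change (AddMonoidAlgebra.curryRingEquiv.toRingHom.comp
      ((AddMonoidAlgebra.domCongr ℤ ℤ
      (AddEquiv.prodComm (M := Fin n₁ → ℤ) (N := Fin n₂ → ℤ))).toRingEquiv.toRingHom.comp
      (AddMonoidAlgebra.mapDomainRingHom ℤ
      (AddMonoidHom.inl (Fin n₁ → ℤ) (Fin n₂ → ℤ))))) x =
      (algebraMap (R1 n₁) (AddMonoidAlgebra (R1 n₁) (Fin n₂ → ℤ))) x
    congr 1
    ext <;> simp)

theorem aux_main {R S G M : Type*} [CommRing R] [IsDomain R] [AddCommGroup G] [TwoUniqueSums G]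
    [CommRing S] [IsDomain S] [Algebra R S] (φ : S ≃ₐ[R] AddMonoidAlgebra R G)
    [AddCommGroup M] [Module R M] {d : R} (h : IsOrderOf R (Submodule.torsion R M) d) :
    IsOrderOf S (Submodule.torsion S (S ⊗[R] M)) (algebraMap R S d) := by
  have : Module.Flat R S := Module.Flat.of_linearEquiv φ.toLinearEquiv
  have : FaithfulSMul R S := by
    rw [faithfulSMul_iff_algebraMap_injective]
    intro x y hxy
    have := congrArg φ hxy
    rw [AlgEquiv.commutes, AlgEquiv.commutes] at this
    exact FaithfulSMul.algebraMap_injective R (AddMonoidAlgebra R G) this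
  exact aux_order_equiv aux_torEquiv (aux_order_baseChange (aux_gcd φ) h)

theorem aux_ufd_RH : UniqueFactorizationMonoid (RH n₁ n₂) := by
  have h2 : UniqueFactorizationMonoid (R2 n₂) := aux_ufd n₂ ℤ
  have := aux_ufd n₁ (R2 n₂)
  exact (aux_phi2 n₁ n₂).symm.toMulEquiv.uniqueFactorizationMonoid this

def aux_prodEquiv {S A B : Type*} [CommRing S] [AddCommGroup A] [Module S A]
    [AddCommGroup B] [Module S B] :
    (Submodule.torsion S A × Submodule.torsion S B) ≃ₗ[S] Submodule.torsion S (A × B) :=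
  { toFun := fun x => ⟨(x.1.1, x.2.1), by
      rw [aux_torsion_prod]; exact ⟨x.1.2, x.2.2⟩⟩
    invFun := fun x => (⟨x.1.1, (aux_torsion_prod.le x.2).1⟩, ⟨x.1.2, (aux_torsion_prod.le x.2).2⟩)
    map_add' := fun _ _ => rfl
    map_smul' := fun _ _ => rfl
    left_inv := fun _ => rfl
    right_inv := fun _ => rfl }

theorem torsion_prod_and_order_mul
    (M₁ : Type*) [AddCommGroup M₁] [Module (R1 n₁) M₁] [Module.Finite (R1 n₁) M₁]
    (M₂ : Type*) [AddCommGroup M₂] [Module (R2 n₂) M₂] [Module.Finite (R2 n₂) M₂] :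
    Submodule.torsion (RH n₁ n₂)
        (((RH n₁ n₂) ⊗[R1 n₁] M₁) × ((RH n₁ n₂) ⊗[R2 n₂] M₂)) =
      (Submodule.torsion (RH n₁ n₂) ((RH n₁ n₂) ⊗[R1 n₁] M₁)).prod
        (Submodule.torsion (RH n₁ n₂) ((RH n₁ n₂) ⊗[R2 n₂] M₂)) ∧
    ∀ d₁ d₂,
      IsOrderOf (R1 n₁) (Submodule.torsion (R1 n₁) M₁) d₁ →
      IsOrderOf (R2 n₂) (Submodule.torsion (R2 n₂) M₂) d₂ →
      IsOrderOf (RH n₁ n₂)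
        (Submodule.torsion (RH n₁ n₂)
          (((RH n₁ n₂) ⊗[R1 n₁] M₁) × ((RH n₁ n₂) ⊗[R2 n₂] M₂)))
        (algebraMap (R1 n₁) (RH n₁ n₂) d₁ * algebraMap (R2 n₂) (RH n₁ n₂) d₂) := by
  refine ⟨aux_torsion_prod, fun d₁ d₂ h₁ h₂ => ?_⟩
  have := aux_ufd_RH n₁ n₂
  exact aux_order_equiv aux_prodEquiv
    (aux_order_prod (aux_main (aux_phi1 n₁ n₂) h₁) (aux_main (aux_phi2 n₁ n₂) h₂))

end
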